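/- Let E := {(r cos φ, r sin φ) : φ ≥ 2π, ((φ+π)(log(φ+π))²)^{-1} ≤ r < (φ (log φ)²)^{-1}} be the logarithmically corrected spiral domain in ℝ². Then there exists C > 0 such that for all δ ∈ (0, 1), |(∂E)^δ| ≤ C δ, where (∂E)^δ := {x ∈ ℝ² : dist(x, ∂E) < δ} and |·| is two-dimensional Lebesgue measure. -/

import Mathlib

open MeasureTheory

/-- The logarithmically corrected spiral domain `E` in the plane,
described in polar coordinates. -/
def logSpiral : Set (EuclideanSpace ℝ (Fin 2)) :=
  {p | ∃ r φ : ℝ, 2 * Real.pi ≤ φ ∧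
      1 / ((φ + Real.pi) * (Real.log (φ + Real.pi)) ^ 2) ≤ r ∧
      r < 1 / (φ * (Real.log φ) ^ 2) ∧
      p 0 = r * Real.cos φ ∧ p 1 = r * Real.sin φ}

/-!
A curve of finite length `L` is covered by `L / δ + 1` balls of radius `δ`, so its
`δ`-neighbourhood in the plane has area `O(δ)`. The frontier of the spiral domain is contained in a
radial segment and the two spirals `r = f φ` and `r = f (φ + π)` with `f φ = 1 / (φ log² φ)`. When
`f` decreases, the spiral `r = f φ`, `φ ≥ a`, has length at most `f a + ∫ f`, and `∫ f` converges
because `f` is the derivative of `-1 / log`. The frontier is computed in the coordinate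
`w = log r + φ i`, where the domain becomes a strip between two graphs over the `φ`-axis: `exp` is
open, and only a bounded part of the strip lies over each annulus around the origin, so the origin
is the only boundary point not visible in the `w`-plane.
-/

open Set Metric Module Filter Topology
open scoped ENNReal NNReal

section Covering

variable {α X : Type*} [LinearOrder α] [PseudoEMetricSpace X]

lemma card_mul_le_eVariationOn_add {γ : α → X} {ε : ℝ≥0∞} (t : Finset α)
    (hγ : (t : Set α).Pairwise fun x y ↦ ε ≤ edist (γ x) (γ y)) :
    t.card * ε ≤ eVariationOn γ t + ε := by
  induction t using Finset.induction_on_max with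
  | empty => simp
  | insert m t ht ih =>
    rcases t.eq_empty_or_nonempty with rfl | hne
    · simp
    have hlast := t.max'_mem hne
    have hsep : ε ≤ edist (γ (t.max' hne)) (γ m) :=
      hγ (by simp [hlast]) (by simp) (ht _ hlast).ne
    have hsplit : eVariationOn γ t + eVariationOn γ {t.max' hne, m} ≤
        eVariationOn γ (insert m t : Finset α) := by
      refine (eVariationOn.add_le_union γ ?_).trans (eVariationOn.mono γ ?_)
      · rintro x hx y (rfl | rfl)
        exacts [t.le_max' x hx, (ht x hx).le]
      · rintro x (hx | rfl | rfl) <;> simp_all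
    calc ((insert m t).card : ℝ≥0∞) * ε = t.card * ε + ε := by
          rw [Finset.card_insert_of_notMem fun hm ↦ (ht m hm).false]; push_cast; ring
      _ ≤ eVariationOn γ t + ε + ε := by
          gcongr; exact ih (hγ.mono (by simp))
      _ ≤ eVariationOn γ t + eVariationOn γ {t.max' hne, m} + ε := by
          rw [eVariationOn.pair]; gcongr
      _ ≤ eVariationOn γ (insert m t : Finset α) + ε := by gcongr

lemma packingNumber_image_mul_le_eVariationOn_add (γ : α → X) (s : Set α) (ε : ℝ≥0) :
    (packingNumber ε (γ '' s) : ℝ≥0∞) * ε ≤ eVariationOn γ s + ε := by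
  simp only [packingNumber, ENat.toENNReal_iSup, ENNReal.iSup_mul, iSup_le_iff]
  intro C hC hsep
  obtain ⟨T, hTs, hT⟩ := SurjOn.exists_bijOn_subset hC
  rw [← hT.image_eq, hT.injOn.encard_image, ← ENNReal.tsum_set_const, ENNReal.tsum_eq_iSup_sum]
  refine iSup_le fun t ↦ ?_
  have hpair : (t.map (.subtype (· ∈ T)) : Set α).Pairwise fun x y ↦ ε ≤ edist (γ x) (γ y) := by
    intro x hx y hy hxy
    obtain ⟨x, -, rfl⟩ := Finset.mem_map.1 hx
    obtain ⟨y, -, rfl⟩ := Finset.mem_map.1 hy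
    exact (hsep (hT.mapsTo x.2) (hT.mapsTo y.2) (hT.injOn.ne x.2 y.2 hxy)).le
  calc ∑ _ ∈ t, (ε : ℝ≥0∞) = (t.map (.subtype (· ∈ T))).card * ε := by simp
    _ ≤ eVariationOn γ (t.map (.subtype (· ∈ T))) + ε := card_mul_le_eVariationOn_add _ hpair
    _ ≤ eVariationOn γ s + ε := by
      gcongr
      exact eVariationOn.mono γ fun x hx ↦ by
        obtain ⟨y, -, rfl⟩ := Finset.mem_map.1 hx
        exact hTs y.2

lemma coveringNumber_image_mul_le_eVariationOn_add (γ : α → X) (s : Set α) (ε : ℝ≥0) :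
    (coveringNumber ε (γ '' s) : ℝ≥0∞) * ε ≤ eVariationOn γ s + ε :=
  (mul_le_mul_left (by exact_mod_cast coveringNumber_le_packingNumber ε _) _).trans
    (packingNumber_image_mul_le_eVariationOn_add γ s ε)

end Covering

section Tube

/-- A set whose `δ`-neighbourhoods have measure `O(δ ^ k)` as `δ → 0`, i.e. one of finite upper
Minkowski content in codimension `k`. The scale is cut off at `1`. -/
def HasTubeBound {X : Type*} [PseudoEMetricSpace X] [MeasurableSpace X] (μ : Measure X) (k : ℕ)
    (A : Set X) : Prop :=
  ∃ C : ℝ≥0, ∀ δ : ℝ≥0, δ < 1 → μ (thickening δ A) ≤ C * δ ^ k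

namespace HasTubeBound

section Basic

variable {X : Type*} [PseudoEMetricSpace X] [MeasurableSpace X] {μ : Measure X} {k : ℕ}
  {A B : Set X}

lemma mono (hB : HasTubeBound μ k B) (hAB : A ⊆ B) : HasTubeBound μ k A := by
  obtain ⟨C, hC⟩ := hB
  exact ⟨C, fun δ hδ ↦ (measure_mono (thickening_subset_of_subset δ hAB)).trans (hC δ hδ)⟩

lemma union (hA : HasTubeBound μ k A) (hB : HasTubeBound μ k B) : HasTubeBound μ k (A ∪ B) := by
  obtain ⟨C, hC⟩ := hA
  obtain ⟨D, hD⟩ := hB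
  refine ⟨C + D, fun δ hδ ↦ ?_⟩
  rw [thickening_union, ENNReal.coe_add, add_mul]
  exact (measure_union_le _ _).trans (add_le_add (hC δ hδ) (hD δ hδ))

end Basic

lemma image_linearIsometryEquiv {E F : Type*}
    [NormedAddCommGroup E] [InnerProductSpace ℝ E] [FiniteDimensional ℝ E]
    [MeasurableSpace E] [BorelSpace E]
    [NormedAddCommGroup F] [InnerProductSpace ℝ F] [FiniteDimensional ℝ F]
    [MeasurableSpace F] [BorelSpace F]
    {k : ℕ} {A : Set E} (hA : HasTubeBound volume k A) (e : E ≃ₗᵢ[ℝ] F) :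
    HasTubeBound volume k (e '' A) := by
  obtain ⟨C, hC⟩ := hA
  refine ⟨C, fun δ hδ ↦ ?_⟩
  have hpre : e ⁻¹' thickening δ (e '' A) = thickening δ A := by
    ext x
    simp only [mem_preimage, mem_thickening_iff, exists_mem_image, e.dist_map]
  rw [← e.measurePreserving.measure_preimage_equiv (f := e.toMeasurableEquiv)]
  exact hpre ▸ hC δ hδ

end HasTubeBound

variable {E : Type*} [NormedAddCommGroup E] [MeasurableSpace E] [BorelSpace E]

lemma measure_thickening_le_coveringNumber_mul (μ : Measure E) [μ.IsAddHaarMeasure] (A : Set E)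
    (δ : ℝ≥0) : μ (thickening δ A) ≤ coveringNumber δ A * μ (ball 0 (2 * δ)) := by
  rcases eq_zero_or_pos δ with rfl | hδ
  · simp [thickening_of_nonpos le_rfl]
  rcases eq_or_ne (coveringNumber δ A) ⊤ with htop | hfin
  · have hball : μ (ball 0 (2 * δ)) ≠ 0 := (measure_ball_pos μ 0 (by positivity)).ne'
    simp [htop, ENNReal.top_mul hball]
  have hcover : thickening δ A ⊆ ⋃ c ∈ minimalCover δ A, ball c (2 * δ) := by
    intro x hx
    obtain ⟨a, ha, hxa⟩ := mem_thickening_iff.1 hx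
    obtain ⟨c, hc, hac⟩ := isCover_minimalCover hfin ha
    have hac : dist a c ≤ δ := edist_le_coe.1 hac
    exact mem_biUnion hc (mem_ball.2 (by linarith [dist_triangle x a c]))
  calc μ (thickening δ A) ≤ μ (⋃ c ∈ minimalCover δ A, ball c (2 * δ)) := measure_mono hcover
    _ ≤ ∑' c : minimalCover δ A, μ (ball (c : E) (2 * δ)) :=
      measure_biUnion_le μ finite_minimalCover.countable _
    _ = coveringNumber δ A * μ (ball 0 (2 * δ)) := by
      simp only [Measure.addHaar_ball_center, ENNReal.tsum_set_const, encard_minimalCover hfin]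

lemma hasTubeBound_image_of_boundedVariationOn [NormedSpace ℝ E] [FiniteDimensional ℝ E]
    (μ : Measure E) [μ.IsAddHaarMeasure] {α : Type*} [LinearOrder α] {γ : α → E} {s : Set α}
    (hγ : BoundedVariationOn γ s) {k : ℕ} (hk : finrank ℝ E = k + 1) :
    HasTubeBound μ k (γ '' s) := by
  have : Nontrivial E := nontrivial_of_finrank_eq_succ hk
  have hC : (eVariationOn γ s + 1) * μ (ball 0 2) ≠ ⊤ :=
    ENNReal.mul_ne_top (ENNReal.add_ne_top.2 ⟨hγ, ENNReal.one_ne_top⟩) measure_ball_lt_top.ne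
  refine ⟨((eVariationOn γ s + 1) * μ (ball 0 2)).toNNReal, fun δ hδ ↦ ?_⟩
  calc μ (thickening δ (γ '' s))
      ≤ coveringNumber δ (γ '' s) * μ (ball 0 (2 * δ)) :=
        measure_thickening_le_coveringNumber_mul μ _ δ
    _ = coveringNumber δ (γ '' s) * δ * (δ ^ k * μ (ball 0 2)) := by
      rw [mul_comm 2 (δ : ℝ), Measure.addHaar_ball_mul μ 0 δ.coe_nonneg, hk,
        ENNReal.ofReal_pow δ.coe_nonneg, ENNReal.ofReal_coe_nnreal, pow_succ]
      ring
    _ ≤ (eVariationOn γ s + 1) * (δ ^ k * μ (ball 0 2)) := by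
      gcongr
      exact (coveringNumber_image_mul_le_eVariationOn_add γ s δ).trans
        (by gcongr; exact_mod_cast hδ.le)
    _ = ((eVariationOn γ s + 1) * μ (ball 0 2)).toNNReal * δ ^ k := by
      rw [ENNReal.coe_toNNReal hC]
      ring

end Tube

section FiniteLength

lemma eVariationOn_le_of_edist_le {α X Y : Type*} [LinearOrder α] [PseudoEMetricSpace X]
    [PseudoEMetricSpace Y] {γ : α → X} {U : α → Y} {s : Set α}
    (h : ∀ x ∈ s, ∀ y ∈ s, x ≤ y → edist (γ x) (γ y) ≤ edist (U x) (U y)) :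
    eVariationOn γ s ≤ eVariationOn U s := by
  refine iSup_le fun ⟨n, u, hu, hus⟩ ↦ ?_
  refine (Finset.sum_le_sum fun i _ ↦ ?_).trans (eVariationOn.sum_le (n := n) hu hus)
  rw [edist_comm, edist_comm (U _)]
  exact h _ (hus i) _ (hus (i + 1)) (hu i.le_succ)

lemma boundedVariationOn_of_dist_le_sub {α X : Type*} [LinearOrder α] [PseudoMetricSpace X]
    {γ : α → X} {U : α → ℝ} {s : Set α} {C : ℝ} (hU : ∀ x ∈ s, |U x| ≤ C)
    (h : ∀ x ∈ s, ∀ y ∈ s, x ≤ y → dist (γ x) (γ y) ≤ U y - U x) : BoundedVariationOn γ s := by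
  have hmono : MonotoneOn U s := fun x hx y hy hxy ↦
    sub_nonneg.1 (dist_nonneg.trans (h x hx y hy hxy))
  refine ne_top_of_le_ne_top (hmono.boundedVariationOn hU) (eVariationOn_le_of_edist_le ?_)
  intro x hx y hy hxy
  rw [edist_dist, edist_dist, Real.dist_eq, abs_sub_comm]
  exact ENNReal.ofReal_le_ofReal ((h x hx y hy hxy).trans (le_abs_self _))

lemma mul_sub_le_intervalIntegral_of_antitoneOn {f : ℝ → ℝ} {x y : ℝ}
    (hf : AntitoneOn f (Icc x y)) (hxy : x ≤ y) : f y * (y - x) ≤ ∫ t in x..y, f t := by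
  have hint : IntervalIntegrable f volume x y :=
    AntitoneOn.intervalIntegrable (by rwa [uIcc_of_le hxy])
  calc f y * (y - x) = ∫ _ in x..y, f y := by simp [mul_comm]
    _ ≤ ∫ t in x..y, f t :=
      intervalIntegral.integral_mono_on hxy (by simp) hint
        fun t ht ↦ hf ht (right_mem_Icc.2 hxy) ht.2

/-- The radius of an inward spiral of finite length as a function of the angle `φ ≥ a`. Downward
jumps of the radius are allowed. -/
structure IsSpiralProfile (a : ℝ) (f : ℝ → ℝ) : Prop where
  antitoneOn : AntitoneOn f (Ici a)
  integrableOn : IntegrableOn f (Ici a)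

namespace IsSpiralProfile

variable {a b : ℝ} {f : ℝ → ℝ}

lemma nonneg (hf : IsSpiralProfile a f) {x : ℝ} (hx : a ≤ x) : 0 ≤ f x := by
  by_contra! hneg
  have hconst : IntegrableOn (fun _ ↦ f x) (Ici x) := by
    have htail : IntegrableOn f (Ici x) := hf.integrableOn.mono_set (Ici_subset_Ici.2 hx)
    refine Integrable.mono htail aestronglyMeasurable_const
      (ae_restrict_of_forall_mem measurableSet_Ici fun y hy ↦ ?_)
    have hle : f y ≤ f x := hf.antitoneOn hx (hx.trans hy) hy
    exact abs_le_abs_of_nonpos hneg.le hle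
  simp [integrableOn_const_iff, hneg.ne] at hconst

lemma comp_add_right (hf : IsSpiralProfile (a + b) f) : IsSpiralProfile a fun x ↦ f (x + b) where
  antitoneOn _ hx _ hy hxy := hf.antitoneOn (add_le_add_left (mem_Ici.1 hx) b)
    (add_le_add_left (mem_Ici.1 hy) b) (add_le_add_left hxy b)
  integrableOn := by
    have hpre := ((measurePreserving_add_right volume b).integrableOn_comp_preimage
      (measurableEmbedding_addRight b)).2 hf.integrableOn
    simpa [Function.comp_def] using hpre

lemma mul_sub_le_intervalIntegral (hf : IsSpiralProfile a f) {x y : ℝ} (hx : a ≤ x) (hxy : x ≤ y) :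
    f y * (y - x) ≤ ∫ φ in x..y, f φ :=
  mul_sub_le_intervalIntegral_of_antitoneOn (hf.antitoneOn.mono fun _ ht ↦ hx.trans ht.1) hxy

lemma intervalIntegral_le (hf : IsSpiralProfile a f) {y : ℝ} (hy : a ≤ y) :
    ∫ φ in a..y, f φ ≤ ∫ φ in Ici a, f φ := by
  rw [intervalIntegral.integral_of_le hy]
  exact setIntegral_mono_set hf.integrableOn
    (ae_restrict_of_forall_mem measurableSet_Ici fun _ ↦ hf.nonneg)
    (Ioc_subset_Ioi_self.trans Ioi_subset_Ici_self).eventuallyLE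

section Smul

variable {E : Type*} [NormedAddCommGroup E] [NormedSpace ℝ E] {p : ℝ → E} {K : ℝ≥0} {M : ℝ}

lemma dist_smul_le (hf : IsSpiralProfile a f) (hK : LipschitzWith K p) (hM : ∀ φ, ‖p φ‖ ≤ M)
    {x y : ℝ} (hx : a ≤ x) (hxy : x ≤ y) :
    dist (f x • p x) (f y • p y) ≤ M * (f x - f y) + K * ∫ φ in x..y, f φ := by
  have hdrop : 0 ≤ f x - f y := sub_nonneg.2 (hf.antitoneOn hx (hx.trans hxy) hxy)
  have hfy : 0 ≤ f y := hf.nonneg (hx.trans hxy)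
  have hp : ‖p x - p y‖ ≤ K * (y - x) := by
    simpa [dist_eq_norm, Real.dist_eq, abs_sub_comm x y, abs_of_nonneg (sub_nonneg.2 hxy)]
      using hK.dist_le_mul x y
  calc dist (f x • p x) (f y • p y)
      = ‖(f x - f y) • p x + f y • (p x - p y)‖ := by rw [dist_eq_norm]; congr 1; module
    _ ≤ (f x - f y) * ‖p x‖ + f y * ‖p x - p y‖ := by
      refine (norm_add_le _ _).trans_eq ?_
      rw [norm_smul, norm_smul, Real.norm_of_nonneg hdrop, Real.norm_of_nonneg hfy]
    _ ≤ (f x - f y) * M + f y * (K * (y - x)) := by gcongr; exact hM x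
    _ = M * (f x - f y) + K * (f y * (y - x)) := by ring
    _ ≤ M * (f x - f y) + K * ∫ φ in x..y, f φ := by
      gcongr
      exact hf.mul_sub_le_intervalIntegral hx hxy

lemma boundedVariationOn_smul (hf : IsSpiralProfile a f) (hK : LipschitzWith K p)
    (hM : ∀ φ, ‖p φ‖ ≤ M) : BoundedVariationOn (fun φ ↦ f φ • p φ) (Ici a) := by
  have hM₀ : 0 ≤ M := (norm_nonneg (p a)).trans (hM a)
  have hint {y : ℝ} (hy : a ≤ y) : IntervalIntegrable f volume a y :=
    (intervalIntegrable_iff_integrableOn_Icc_of_le hy).2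
      (hf.integrableOn.mono_set Icc_subset_Ici_self)
  -- `U` majorises arc length: `-M f` pays for the radial motion, `K ∫ f` for the angular one.
  refine boundedVariationOn_of_dist_le_sub (U := fun φ ↦ K * (∫ t in a..φ, f t) - M * f φ)
    (C := K * (∫ t in Ici a, f t) + M * f a) (fun x hx ↦ ?_) fun x hx y hy hxy ↦ ?_
  · have hI₀ : 0 ≤ ∫ t in a..x, f t :=
      intervalIntegral.integral_nonneg hx fun t ht ↦ hf.nonneg ht.1
    have hI := hf.intervalIntegral_le hx
    have hfx₀ := hf.nonneg hx
    have hfx := hf.antitoneOn self_mem_Ici hx hx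
    have hKx : K * (∫ t in a..x, f t) ≤ K * ∫ t in Ici a, f t := by gcongr
    have hMx : M * f x ≤ M * f a := by gcongr
    have hKx₀ : 0 ≤ K * (∫ t in a..x, f t) := by positivity
    have hMx₀ : 0 ≤ M * f x := by positivity
    exact abs_le.2 ⟨by linarith, by linarith⟩
  · have hsplit := intervalIntegral.integral_interval_sub_left (hint hy) (hint hx)
    calc dist (f x • p x) (f y • p y)
        ≤ M * (f x - f y) + K * ∫ t in x..y, f t := hf.dist_smul_le hK hM hx hxy
      _ = _ := by rw [← hsplit]; ring

end Smul

end IsSpiralProfile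

lemma isometry_circleMap_radius (c : ℂ) (θ : ℝ) : Isometry fun r ↦ circleMap c r θ :=
  Isometry.of_dist_eq fun r s ↦ by
    simp [circleMap, dist_eq_norm, ← sub_mul, ← Complex.ofReal_sub]

/-- The curve `r = f φ` in polar coordinates, parametrised by the (unrestricted) angle `φ`. -/
noncomputable def polarCurve (f : ℝ → ℝ) (φ : ℝ) : ℂ := circleMap 0 (f φ) φ

lemma polarCurve_eq_smul (f : ℝ → ℝ) : polarCurve f = fun φ ↦ f φ • circleMap 0 1 φ := by
  ext φ
  simp [polarCurve, circleMap]

lemma IsSpiralProfile.boundedVariationOn_polarCurve {a : ℝ} {f : ℝ → ℝ}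
    (hf : IsSpiralProfile a f) : BoundedVariationOn (polarCurve f) (Ici a) := by
  rw [polarCurve_eq_smul]
  exact hf.boundedVariationOn_smul (lipschitzWith_circleMap 0 1)
    fun φ ↦ (norm_circleMap_zero 1 φ).le

end FiniteLength

section ExpFrontier
open Complex

lemma closure_exp_image_subset {S : Set ℂ}
    (hS : ∀ r R : ℝ, Bornology.IsBounded (S ∩ re ⁻¹' Icc r R)) :
    closure (exp '' S) ⊆ insert 0 (exp '' closure S) := by
  intro z hz
  refine or_iff_not_imp_left.2 fun hz₀ ↦ ?_
  set r := Real.log ‖z‖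
  have hr : Real.exp r = ‖z‖ := Real.exp_log (norm_pos_iff.2 hz₀)
  set T := S ∩ re ⁻¹' Icc (r - 1) (r + 1)
  have hann : norm ⁻¹' Ioo (Real.exp (r - 1)) (Real.exp (r + 1)) ∈ 𝓝 z :=
    continuous_norm.continuousAt.preimage_mem_nhds
      (Ioo_mem_nhds (hr ▸ by simp) (hr ▸ by simp))
  have hlocal : z ∈ closure (exp '' T) := by
    have hfreq := (mem_closure_iff_frequently.1 hz).and_eventually hann
    refine mem_closure_iff_frequently.2 (hfreq.mono ?_)
    rintro _ ⟨⟨w, hw, rfl⟩, hlo, hhi⟩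
    rw [norm_exp, Real.exp_lt_exp] at hlo hhi
    exact mem_image_of_mem _ ⟨hw, hlo.le, hhi.le⟩
  have hcompact : IsCompact (closure T) := (hS _ _).isCompact_closure
  have hsub : closure (exp '' T) ⊆ exp '' closure T :=
    closure_minimal (image_mono subset_closure) (hcompact.image continuous_exp).isClosed
  exact image_mono (closure_mono inter_subset_left) (hsub hlocal)

lemma frontier_exp_image_subset {S : Set ℂ}
    (hS : ∀ r R : ℝ, Bornology.IsBounded (S ∩ re ⁻¹' Icc r R)) :
    frontier (exp '' S) ⊆ insert 0 (exp '' frontier S) := by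
  rintro z ⟨hcl, hint⟩
  obtain rfl | ⟨w, hw, rfl⟩ := closure_exp_image_subset hS hcl
  · exact mem_insert _ _
  · exact .inr ⟨w, ⟨hw, fun hwS ↦ hint
      (isOpenMap_exp.image_interior_subset S (mem_image_of_mem _ hwS))⟩, rfl⟩

lemma nonempty_frontier_exp_image {S : Set ℂ} (hS : S.Nonempty) :
    (frontier (exp '' S)).Nonempty := by
  refine nonempty_frontier_iff.2 ⟨hS.image exp, fun huniv ↦ ?_⟩
  obtain ⟨w, -, hw⟩ := huniv ▸ mem_univ (0 : ℂ)
  exact exp_ne_zero w hw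


lemma exp_eq_circleMap (w : ℂ) : exp w = circleMap 0 (Real.exp w.re) w.im := by
  rw [circleMap_zero, ofReal_exp, ← exp_add, re_add_im]

/-- The region `g φ ≤ r < f φ`, `a ≤ φ` of polar coordinates, in the logarithmic coordinate
`w = log r + φ i`. -/
def polarStrip (a : ℝ) (g f : ℝ → ℝ) : Set ℂ :=
  {w | a ≤ w.im ∧ g w.im ≤ Real.exp w.re ∧ Real.exp w.re < f w.im}

variable {a : ℝ} {g f : ℝ → ℝ}

lemma closure_polarStrip_subset (hg : ContinuousOn g (Ici a)) (hf : ContinuousOn f (Ici a)) :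
    closure (polarStrip a g f) ⊆
      {w | a ≤ w.im ∧ g w.im ≤ Real.exp w.re ∧ Real.exp w.re ≤ f w.im} := by
  have hhalf : IsClosed {w : ℂ | a ≤ w.im} := isClosed_le continuous_const continuous_im
  have hexp : ContinuousOn (fun w : ℂ ↦ Real.exp w.re) {w | a ≤ w.im} := by fun_prop
  have him : ContinuousOn im {w : ℂ | a ≤ w.im} := continuous_im.continuousOn
  have hlo := hhalf.isClosed_le (hg.comp him fun _ ↦ id) hexp
  have hhi := hhalf.isClosed_le hexp (hf.comp him fun _ ↦ id)
  refine (closure_minimal ?_ (hlo.inter hhi)).trans ?_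
  · rintro w ⟨ha, hgw, hfw⟩
    exact ⟨⟨ha, hgw⟩, ha, hfw.le⟩
  · rintro w ⟨⟨ha, hgw⟩, -, hfw⟩
    exact ⟨ha, hgw, hfw⟩

lemma mem_interior_polarStrip (hg : ContinuousOn g (Ici a)) (hf : ContinuousOn f (Ici a)) {w : ℂ}
    (ha : a < w.im) (hlo : g w.im < Real.exp w.re) (hhi : Real.exp w.re < f w.im) :
    w ∈ interior (polarStrip a g f) := by
  have hIci : Ici a ∈ 𝓝 w.im := Ici_mem_nhds ha
  have hg' : ContinuousAt (fun z : ℂ ↦ g z.im) w :=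
    ContinuousAt.comp (hg.continuousAt hIci) continuous_im.continuousAt
  have hf' : ContinuousAt (fun z : ℂ ↦ f z.im) w :=
    ContinuousAt.comp (hf.continuousAt hIci) continuous_im.continuousAt
  have hexp : ContinuousAt (fun z : ℂ ↦ Real.exp z.re) w := by fun_prop
  rw [mem_interior_iff_mem_nhds]
  filter_upwards [continuous_im.continuousAt.eventually_const_lt ha, hg'.eventually_lt hexp hlo,
    hexp.eventually_lt hf' hhi] with z ha hlo hhi using ⟨ha.le, hlo.le, hhi⟩

lemma frontier_polarStrip_subset (hg : ContinuousOn g (Ici a)) (hf : ContinuousOn f (Ici a)) :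
    frontier (polarStrip a g f) ⊆
      {w | w.im = a ∧ Real.exp w.re ≤ f a} ∪ {w | a ≤ w.im ∧ Real.exp w.re = g w.im} ∪
        {w | a ≤ w.im ∧ Real.exp w.re = f w.im} := by
  rintro w ⟨hcl, hint⟩
  obtain ⟨ha, hlo, hhi⟩ := closure_polarStrip_subset hg hf hcl
  rcases ha.eq_or_lt with rfl | ha'
  · exact .inl (.inl ⟨rfl, hhi⟩)
  rcases hlo.eq_or_lt with hg' | hlo'
  · exact .inl (.inr ⟨ha, hg'.symm⟩)
  rcases hhi.eq_or_lt with hf' | hhi'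
  · exact .inr ⟨ha, hf'⟩
  · exact absurd (mem_interior_polarStrip hg hf ha' hlo' hhi') hint

lemma isBounded_polarStrip_inter_re_preimage_Icc (hf : IsSpiralProfile a f) (r R : ℝ) :
    Bornology.IsBounded (polarStrip a g f ∩ re ⁻¹' Icc r R) := by
  have hbox := (isBounded_Icc r R).reProdIm
    (isBounded_Icc a (a + (∫ φ in Ici a, f φ) / Real.exp r))
  refine hbox.subset ?_
  rintro w ⟨⟨ha, -, hhi⟩, hw⟩
  refine ⟨hw, ha, sub_le_iff_le_add'.1 ((le_div_iff₀' (Real.exp_pos r)).2 ?_)⟩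
  calc Real.exp r * (w.im - a) ≤ f w.im * (w.im - a) :=
        mul_le_mul_of_nonneg_right ((Real.exp_le_exp.2 hw.1).trans hhi.le) (sub_nonneg.2 ha)
    _ ≤ ∫ φ in a..w.im, f φ := hf.mul_sub_le_intervalIntegral le_rfl ha
    _ ≤ ∫ φ in Ici a, f φ := hf.intervalIntegral_le ha

lemma frontier_exp_image_polarStrip_subset (hg : ContinuousOn g (Ici a))
    (hf : ContinuousOn f (Ici a)) (hfp : IsSpiralProfile a f) :
    frontier (exp '' polarStrip a g f) ⊆
      (circleMap 0 · a) '' Icc 0 (f a) ∪ polarCurve g '' Ici a ∪ polarCurve f '' Ici a := by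
  refine (frontier_exp_image_subset (isBounded_polarStrip_inter_re_preimage_Icc hfp)).trans
    (insert_subset ?_ ?_)
  · exact .inl (.inl ⟨0, left_mem_Icc.2 (hfp.nonneg le_rfl), congrFun (circleMap_zero_radius 0) a⟩)
  rintro _ ⟨w, hw, rfl⟩
  rw [exp_eq_circleMap]
  rcases frontier_polarStrip_subset hg hf hw with (⟨ha, hle⟩ | ⟨ha, heq⟩) | ⟨ha, heq⟩
  · exact .inl (.inl ⟨Real.exp w.re, ⟨(Real.exp_pos _).le, hle⟩, by rw [ha]⟩)
  · exact .inl (.inr ⟨w.im, ha, by rw [polarCurve, heq]⟩)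
  · exact .inr ⟨w.im, ha, by rw [polarCurve, heq]⟩

lemma hasTubeBound_frontier_exp_image_polarStrip (hg : ContinuousOn g (Ici a))
    (hf : ContinuousOn f (Ici a)) (hgp : IsSpiralProfile a g) (hfp : IsSpiralProfile a f) :
    HasTubeBound volume 1 (frontier (exp '' polarStrip a g f)) := by
  have hsegment : BoundedVariationOn (circleMap 0 · a) (Icc 0 (f a)) := by
    simpa using (isometry_circleMap_radius 0 a).lipschitz.comp_boundedVariationOn (.id_Icc 0 (f a))
  have htube {γ : ℝ → ℂ} {s : Set ℝ} (hγ : BoundedVariationOn γ s) :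
      HasTubeBound volume 1 (γ '' s) :=
    hasTubeBound_image_of_boundedVariationOn volume hγ finrank_real_complex
  exact (((htube hsegment).union (htube hgp.boundedVariationOn_polarCurve)).union
    (htube hfp.boundedVariationOn_polarCurve)).mono
      (frontier_exp_image_polarStrip_subset hg hf hfp)

end ExpFrontier

section LogSpiral

/-- The radius `1 / (φ log² φ)` of the spirals bounding `logSpiral`. -/
noncomputable def logProfile (φ : ℝ) : ℝ := 1 / (φ * Real.log φ ^ 2)

lemma logProfile_pos {φ : ℝ} (hφ : 1 < φ) : 0 < logProfile φ := by
  have := Real.log_pos hφ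
  unfold logProfile
  positivity

lemma strictAntiOn_logProfile : StrictAntiOn logProfile (Ioi 1) := by
  intro x hx y _ hxy
  have hx₀ : 0 < x := zero_lt_one.trans hx
  have hlog : 0 < Real.log x := Real.log_pos hx
  unfold logProfile
  gcongr

lemma continuousOn_logProfile : ContinuousOn logProfile (Ioi 1) := by
  have hne : ∀ φ ∈ Ioi (1 : ℝ), φ ≠ 0 ∧ Real.log φ ≠ 0 := fun φ hφ ↦
    ⟨(zero_lt_one.trans hφ).ne', (Real.log_pos hφ).ne'⟩
  unfold logProfile
  fun_prop (disch := grind)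

lemma isSpiralProfile_logProfile {a : ℝ} (ha : 1 < a) : IsSpiralProfile a logProfile where
  antitoneOn := strictAntiOn_logProfile.antitoneOn.mono (Ici_subset_Ioi.2 ha)
  integrableOn := by
    have heq : logProfile = fun φ ↦ φ⁻¹ / Real.log φ ^ 2 := by
      ext φ
      rw [logProfile, one_div, mul_inv, div_eq_mul_inv]
    rw [heq, integrableOn_Ici_iff_integrableOn_Ioi]
    exact integrableOn_inv_div_log_sq_Ioi ha

lemma orthonormalBasisOneI_repr_circleMap_eq_iff {r φ : ℝ} {p : EuclideanSpace ℝ (Fin 2)} :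
    Complex.orthonormalBasisOneI.repr (circleMap 0 r φ) = p ↔
      p 0 = r * Real.cos φ ∧ p 1 = r * Real.sin φ := by
  have hre : (circleMap 0 r φ).re = r * Real.cos φ := by
    simp [circleMap, Complex.exp_ofReal_mul_I_re]
  have him : (circleMap 0 r φ).im = r * Real.sin φ := by
    simp [circleMap, Complex.exp_ofReal_mul_I_im]
  rw [PiLp.ext_iff, Fin.forall_fin_two, Complex.orthonormalBasisOneI_repr_apply, hre, him]
  simp [eq_comm]

/-- `logSpiral` in logarithmic polar coordinates. -/
def logSpiralStrip : Set ℂ :=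
  polarStrip (2 * Real.pi) (fun φ ↦ logProfile (φ + Real.pi)) logProfile

lemma logSpiral_eq_image :
    logSpiral = Complex.orthonormalBasisOneI.repr '' (Complex.exp '' logSpiralStrip) := by
  have hpos {φ : ℝ} (hφ : 2 * Real.pi ≤ φ) : 0 < logProfile (φ + Real.pi) :=
    logProfile_pos (by linarith [Real.pi_gt_three])
  ext p
  simp only [image_image, mem_image, exp_eq_circleMap, orthonormalBasisOneI_repr_circleMap_eq_iff]
  constructor
  · rintro ⟨r, φ, hφ, hlo, hhi, hp⟩
    have hr : Real.exp (Real.log r) = r := Real.exp_log ((hpos hφ).trans_le hlo)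
    refine ⟨⟨Real.log r, φ⟩, ⟨hφ, ?_⟩, ?_⟩ <;> simp only [hr]
    exacts [⟨hlo, hhi⟩, hp]
  · rintro ⟨w, ⟨hφ, hlo, hhi⟩, hp⟩
    exact ⟨Real.exp w.re, w.im, hφ, hlo, hhi, hp⟩

lemma frontier_logSpiral :
    frontier logSpiral =
      Complex.orthonormalBasisOneI.repr '' frontier (Complex.exp '' logSpiralStrip) := by
  rw [logSpiral_eq_image]
  exact (Complex.orthonormalBasisOneI.repr.toHomeomorph.image_frontier _).symm

lemma nonempty_logSpiralStrip : logSpiralStrip.Nonempty := by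
  have hpi := Real.pi_gt_three
  have hpos : 0 < logProfile (2 * Real.pi + Real.pi) := logProfile_pos (by linarith)
  have hlt : logProfile (2 * Real.pi + Real.pi) < logProfile (2 * Real.pi) :=
    strictAntiOn_logProfile (mem_Ioi.2 (by linarith)) (mem_Ioi.2 (by linarith)) (by linarith)
  refine ⟨⟨Real.log (logProfile (2 * Real.pi + Real.pi)), 2 * Real.pi⟩, le_rfl, ?_⟩
  simpa only [Real.exp_log hpos, le_refl, true_and] using hlt

lemma nonempty_frontier_logSpiral : (frontier logSpiral).Nonempty :=
  frontier_logSpiral ▸ (nonempty_frontier_exp_image nonempty_logSpiralStrip).image _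

lemma hasTubeBound_frontier_logSpiral : HasTubeBound volume 1 (frontier logSpiral) := by
  have hpi := Real.pi_gt_three
  have houter : ContinuousOn logProfile (Ici (2 * Real.pi)) :=
    continuousOn_logProfile.mono (Ici_subset_Ioi.2 (by linarith))
  have hinner : ContinuousOn (fun φ ↦ logProfile (φ + Real.pi)) (Ici (2 * Real.pi)) :=
    houter.comp (by fun_prop) fun φ hφ ↦ by
      simp only [mem_Ici] at hφ ⊢
      linarith
  rw [frontier_logSpiral]
  exact (hasTubeBound_frontier_exp_image_polarStrip hinner houter
    (isSpiralProfile_logProfile (by linarith)).comp_add_right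
    (isSpiralProfile_logProfile (by linarith))).image_linearIsometryEquiv _

end LogSpiral

theorem stmt_17 : ∃ C : ℝ, 0 < C ∧ ∀ δ : ℝ, 0 < δ → δ < 1 →
    volume {x : EuclideanSpace ℝ (Fin 2) | Metric.infDist x (frontier logSpiral) < δ}
      ≤ ENNReal.ofReal (C * δ) := by
  obtain ⟨C, hC⟩ := hasTubeBound_frontier_logSpiral
  refine ⟨C + 1, by positivity, fun δ hδ hδ₁ ↦ ?_⟩
  lift δ to ℝ≥0 using hδ.le
  have htube : {x | infDist x (frontier logSpiral) < δ} = thickening δ (frontier logSpiral) :=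
    ext fun x ↦ (mem_thickening_iff_infDist_lt nonempty_frontier_logSpiral).symm
  calc volume {x | infDist x (frontier logSpiral) < δ}
      ≤ C * (δ : ℝ≥0∞) ^ 1 := htube ▸ hC δ hδ₁
    _ = ENNReal.ofReal (C * δ) := by
      rw [pow_one, ENNReal.ofReal_mul C.coe_nonneg, ENNReal.ofReal_coe_nnreal,
        ENNReal.ofReal_coe_nnreal]
    _ ≤ ENNReal.ofReal ((C + 1) * δ) := ENNReal.ofReal_le_ofReal (by gcongr; linarith)
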